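/- If W ⊆ E_3 is a 2-dimensional subspace exactly two of whose three nonzero elements have a 2-element representative, then there exists a unique unordered pair of disjoint 2-element subsets P_1, P_2 ⊆ I such that the three nonzero elements of W are [P_1], [P_2], and [P_1 ∪ P_2]; conversely, every pair of disjoint 2-element subsets of I determines such a 2-dimensional subspace. Hence these subspaces (type II.2, as for η = w_1 − w_2, ξ = w_3 − w_4) are in bijection with the 210 unordered pairs of disjoint 2-element subsets of an 8-element set. -/

import Mathlib

/-!
On even subsets, `cls` turns symmetric difference into addition (`cls_add`), and two even subsets
have the same class exactly when they are equal or complementary (`cls_eq_iff`). Comparing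
cardinalities in an 8-element set, a 2-element representative is therefore unique
(`cls_inj_of_card_two`) and the class of a 4-element set has none (`not_hasRep_two_of_card_four`).

A 2-dimensional space over `F_2` has nonzero elements `a`, `b`, `a + b` for any two distinct nonzero
`a`, `b` in it (`nonzero_eq_of_finrank_two`). If `a = [P₁]` and `b = [P₂]` with distinct pairs
`P₁`, `P₂` that meet, then `P₁ ∆ P₂` is again a pair and all three nonzero elements have a 2-element
representative; if they are disjoint, then `P₁ ∆ P₂ = P₁ ∪ P₂` has four elements and exactly two do.
The subspaces in question thus correspond bijectively to unordered pairs of disjoint pairs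
(`existsUnique_pairs`, `exists_subspace`), and these are counted by enumeration.
-/

open Finset Submodule

noncomputable section

def sumMap : (Fin 8 → ZMod 2) →ₗ[ZMod 2] ZMod 2 where
  toFun v := ∑ i, v i
  map_add' v w := by simp [Finset.sum_add_distrib]
  map_smul' c v := by simp [Finset.mul_sum]

def V3 : Submodule (ZMod 2) (Fin 8 → ZMod 2) := LinearMap.ker sumMap

@[simp] lemma sumMap_apply (v : Fin 8 → ZMod 2) : sumMap v = ∑ i, v i := rfl

lemma mem_V3 (v : Fin 8 → ZMod 2) : v ∈ V3 ↔ ∑ i, v i = 0 := by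
  simp [V3, LinearMap.mem_ker]

def onesV : V3 := ⟨fun _ => 1, by rw [mem_V3]; decide⟩

abbrev E3 := V3 ⧸ span (ZMod 2) {onesV}

def indFun (S : Finset (Fin 8)) : Fin 8 → ZMod 2 := fun i => if i ∈ S then 1 else 0

open Classical in
def cls (S : Finset (Fin 8)) : E3 :=
  if h : indFun S ∈ V3 then Submodule.Quotient.mk (⟨indFun S, h⟩ : V3) else 0

/-- `x` has a `k`-element representative -/
def hasRep (k : ℕ) (x : E3) : Prop := ∃ S : Finset (Fin 8), S.card = k ∧ cls S = x

/-! ### Classes of even subsets -/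

lemma indFun_mem_V3 {S : Finset (Fin 8)} (hS : Even S.card) : indFun S ∈ V3 := by
  rw [mem_V3]
  simpa [indFun] using (ZMod.natCast_eq_zero_iff_even).2 hS

lemma cls_of_even {S : Finset (Fin 8)} (hS : Even S.card) :
    cls S = Submodule.Quotient.mk (⟨indFun S, indFun_mem_V3 hS⟩ : V3) :=
  dif_pos (indFun_mem_V3 hS)

lemma even_card_symmDiff {S T : Finset (Fin 8)} (hS : Even S.card) (hT : Even T.card) :
    Even (symmDiff S T).card := by
  have h1 := Finset.card_sdiff_add_card_inter S T
  have h2 := Finset.card_sdiff_add_card_inter T S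
  have h3 : (symmDiff S T).card = (S \ T).card + (T \ S).card :=
    Finset.card_union_of_disjoint disjoint_sdiff_sdiff
  rw [Finset.inter_comm] at h2
  rw [Nat.even_iff] at *
  omega

lemma cls_add {S T : Finset (Fin 8)} (hS : Even S.card) (hT : Even T.card) :
    cls S + cls T = cls (symmDiff S T) := by
  rw [cls_of_even hS, cls_of_even hT, cls_of_even (even_card_symmDiff hS hT),
    ← Submodule.Quotient.mk_add]
  congr 1
  ext i
  by_cases h1 : i ∈ S <;> by_cases h2 : i ∈ T <;>
    simp [indFun, Finset.mem_symmDiff, h1, h2, CharTwo.add_self_eq_zero]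

lemma cls_eq_iff {S T : Finset (Fin 8)} (hS : Even S.card) (hT : Even T.card) :
    cls S = cls T ↔ S = T ∨ S = Tᶜ := by
  rw [cls_of_even hS, cls_of_even hT, Submodule.Quotient.eq, Submodule.mem_span_singleton]
  have key : ∀ c : ZMod 2, c = 0 ∨ c = 1 := by decide
  have coord (c : ZMod 2) : c • onesV = (⟨indFun S, indFun_mem_V3 hS⟩ : V3)
      - ⟨indFun T, indFun_mem_V3 hT⟩ ↔ ∀ i, c = indFun S i - indFun T i := by
    rw [Subtype.ext_iff, funext_iff]
    simp [onesV]
  constructor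
  · rintro ⟨c, hc⟩
    rw [coord] at hc
    rcases key c with rfl | rfl
    · left
      ext i
      have := hc i
      by_cases h1 : i ∈ S <;> by_cases h2 : i ∈ T <;> simp [indFun, h1, h2] at this ⊢
    · right
      ext i
      have := hc i
      by_cases h1 : i ∈ S <;> by_cases h2 : i ∈ T <;> simp [indFun, h1, h2] at this ⊢
  · rintro (rfl | rfl)
    · exact ⟨0, (coord 0).2 fun i => by simp⟩
    · refine ⟨1, (coord 1).2 fun i => ?_⟩
      by_cases h : i ∈ T <;> simp [indFun, h]

lemma cls_ne_zero {S : Finset (Fin 8)} (hS : Even S.card) (h0 : S.card ≠ 0) (h8 : S.card ≠ 8) :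
    cls S ≠ 0 := by
  have hz : cls ∅ = 0 := by
    have h := cls_add (S := ∅) (T := ∅) (by simp) (by simp)
    rw [symmDiff_self] at h
    exact add_eq_left.1 h
  rw [← hz, Ne, cls_eq_iff hS (by simp)]
  rintro (rfl | rfl) <;> simp at h0 h8

lemma cls_inj_of_card_two {S T : Finset (Fin 8)} (hS : S.card = 2) (hT : T.card = 2)
    (h : cls S = cls T) : S = T := by
  rcases (cls_eq_iff (by simp [hS]) (by simp [hT])).1 h with h | h
  · exact h
  · rw [h, Finset.card_compl, hT] at hS
    simp at hS

lemma not_hasRep_two_of_card_four {T : Finset (Fin 8)} (hT : T.card = 4) :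
    ¬ hasRep 2 (cls T) := by
  rintro ⟨S, hS, h⟩
  rcases (cls_eq_iff (by simp [hS]) (by rw [hT]; decide)).1 h with rfl | rfl
  · omega
  · rw [Finset.card_compl, hT] at hS
    simp at hS

/-! ### Two-dimensional subspaces over `F_2` -/

lemma nonzero_span_pair {a b : E3} (ha : a ≠ 0) (hb : b ≠ 0) (hab : a ≠ b) :
    {x : E3 | x ∈ span (ZMod 2) {a, b} ∧ x ≠ 0} = {a, b, a + b} := by
  have key : ∀ c : ZMod 2, c = 0 ∨ c = 1 := by decide
  have hs : a + b ≠ 0 := fun h => hab <| by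
    rw [eq_neg_of_add_eq_zero_left h, ZModModule.neg_eq_self b]
  ext x
  simp only [Set.mem_ofPred_eq, Submodule.mem_span_pair, Set.mem_insert_iff,
    Set.mem_singleton_iff]
  constructor
  · rintro ⟨⟨c, d, rfl⟩, hx⟩
    rcases key c with rfl | rfl <;> rcases key d with rfl | rfl <;> simp at hx ⊢
  · rintro (rfl | rfl | rfl)
    · exact ⟨⟨1, 0, by simp⟩, ha⟩
    · exact ⟨⟨0, 1, by simp⟩, hb⟩
    · exact ⟨⟨1, 1, by simp⟩, hs⟩

lemma finrank_span_pair_eq_two {a b : E3} (ha : a ≠ 0) (hb : b ≠ 0) (hab : a ≠ b) :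
    Module.finrank (ZMod 2) (span (ZMod 2) {a, b}) = 2 := by
  have key : ∀ c : ZMod 2, c = 0 ∨ c = 1 := by decide
  have hli : LinearIndependent (ZMod 2) ![a, b] := by
    rw [LinearIndependent.pair_iff]
    intro s t h
    rcases key s with rfl | rfl <;> rcases key t with rfl | rfl
    · simp
    · simp [hb] at h
    · simp [ha] at h
    · rw [one_smul, one_smul] at h
      exact absurd (by rw [eq_neg_of_add_eq_zero_left h, ZModModule.neg_eq_self b]) hab
  have hr : ({a, b} : Set E3) = Set.range ![a, b] := by simp [Set.pair_comm]
  rw [hr]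
  exact finrank_span_eq_card hli

lemma nonzero_eq_of_finrank_two {W : Submodule (ZMod 2) E3}
    (hW : Module.finrank (ZMod 2) W = 2) {a b : E3} (haW : a ∈ W) (hbW : b ∈ W)
    (ha : a ≠ 0) (hb : b ≠ 0) (hab : a ≠ b) :
    {x : E3 | x ∈ W ∧ x ≠ 0} = {a, b, a + b} := by
  have hle : span (ZMod 2) {a, b} ≤ W := by
    rw [span_le]
    rintro x (rfl | rfl) <;> assumption
  rw [← Submodule.eq_of_le_of_finrank_eq hle (by rw [finrank_span_pair_eq_two ha hb hab, hW])]
  exact nonzero_span_pair ha hb hab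

/-! ### Subspaces and pairs of disjoint pairs -/

lemma cls_add_of_disjoint {P Q : Finset (Fin 8)} (hP : P.card = 2) (hQ : Q.card = 2)
    (h : Disjoint P Q) : cls P + cls Q = cls (P ∪ Q) := by
  rw [cls_add (by simp [hP]) (by simp [hQ]), h.symmDiff_eq_sup, Finset.sup_eq_union]

lemma existsUnique_pairs (W : Submodule (ZMod 2) E3) (hW : Module.finrank (ZMod 2) W = 2)
    (hc : Nat.card {x : E3 // x ∈ W ∧ x ≠ 0 ∧ hasRep 2 x} = 2) :
    ∃! PP : Finset (Finset (Fin 8)), PP.card = 2 ∧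
      ∃ P₁ P₂ : Finset (Fin 8), PP = {P₁, P₂} ∧
        P₁.card = 2 ∧ P₂.card = 2 ∧ Disjoint P₁ P₂ ∧
        {x : E3 | x ∈ W ∧ x ≠ 0} = {cls P₁, cls P₂, cls (P₁ ∪ P₂)} := by
  obtain ⟨a, b, hab, hset⟩ :
      ∃ a b, a ≠ b ∧ {x : E3 | x ∈ W ∧ x ≠ 0 ∧ hasRep 2 x} = {a, b} := Set.ncard_eq_two.1 hc
  have hset' (x : E3) : (x ∈ W ∧ x ≠ 0 ∧ hasRep 2 x) ↔ x = a ∨ x = b := Set.ext_iff.1 hset x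
  obtain ⟨haW, ha, P, hP, rfl⟩ := (hset' a).2 (Or.inl rfl)
  obtain ⟨hbW, hb, Q, hQ, rfl⟩ := (hset' b).2 (Or.inr rfl)
  have hPQ : P ≠ Q := fun h => hab (by rw [h])
  have hnz := nonzero_eq_of_finrank_two hW haW hbW ha hb hab
  have hdisj : Disjoint P Q := by
    by_contra hnd
    -- Distinct pairs sharing a point differ by a pair, so `[P] + [Q]` would be a third element
    -- with a 2-element representative.
    have hcard : (symmDiff P Q).card = 2 := by
      have h1 := Finset.card_sdiff_add_card_inter P Q
      have h2 := Finset.card_sdiff_add_card_inter Q P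
      have h3 : (symmDiff P Q).card = (P \ Q).card + (Q \ P).card :=
        Finset.card_union_of_disjoint disjoint_sdiff_sdiff
      rw [Finset.inter_comm] at h2
      have h4 : 0 < (P ∩ Q).card :=
        Finset.card_pos.2 (Finset.not_disjoint_iff_nonempty_inter.1 hnd)
      have h5 : (P ∩ Q).card ≠ 2 := fun h => hPQ <|
        (Finset.eq_of_subset_of_card_le Finset.inter_subset_left (by omega)).symm.trans
          (Finset.eq_of_subset_of_card_le Finset.inter_subset_right (by omega))
      omega
    have hmem : cls P + cls Q ∈ {x : E3 | x ∈ W ∧ x ≠ 0} := by rw [hnz]; simp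
    rcases (hset' _).1 ⟨hmem.1, hmem.2, _, hcard, (cls_add (by simp [hP]) (by simp [hQ])).symm⟩
      with h | h
    · exact hb (add_eq_left.1 h)
    · exact ha (add_eq_right.1 h)
  rw [cls_add_of_disjoint hP hQ hdisj] at hnz
  refine ⟨{P, Q}, ⟨Finset.card_pair hPQ, P, Q, rfl, hP, hQ, hdisj, hnz⟩, ?_⟩
  rintro _ ⟨hcard, R, S, rfl, hR, hS, -, hRS⟩
  have hmem (T : Finset (Fin 8)) (hT : T.card = 2)
      (h : cls T ∈ {x : E3 | x ∈ W ∧ x ≠ 0}) : T ∈ ({P, Q} : Finset (Finset (Fin 8))) := by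
    rcases (hset' _).1 ⟨h.1, h.2, T, hT, rfl⟩ with h | h
    · simp [cls_inj_of_card_two hT hP h]
    · simp [cls_inj_of_card_two hT hQ h]
  refine Finset.eq_of_subset_of_card_le ?_ (by rw [hcard, Finset.card_pair hPQ])
  intro T hT
  rcases Finset.mem_insert.1 hT with rfl | hT
  · exact hmem _ hR (by rw [hRS]; simp)
  · rw [Finset.mem_singleton.1 hT]
    exact hmem _ hS (by rw [hRS]; simp)

lemma exists_subspace (P Q : Finset (Fin 8)) (hP : P.card = 2) (hQ : Q.card = 2)
    (h : Disjoint P Q) :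
    ∃ W : Submodule (ZMod 2) E3, Module.finrank (ZMod 2) W = 2 ∧
      Nat.card {x : E3 // x ∈ W ∧ x ≠ 0 ∧ hasRep 2 x} = 2 ∧
      {x : E3 | x ∈ W ∧ x ≠ 0} = {cls P, cls Q, cls (P ∪ Q)} := by
  have hPQ : P ≠ Q := by
    rintro rfl
    rw [disjoint_self.1 h] at hP
    simp at hP
  have ha : cls P ≠ 0 := cls_ne_zero (by simp [hP]) (by omega) (by omega)
  have hb : cls Q ≠ 0 := cls_ne_zero (by simp [hQ]) (by omega) (by omega)
  have hab : cls P ≠ cls Q := fun h => hPQ (cls_inj_of_card_two hP hQ h)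
  have hnz := nonzero_span_pair ha hb hab
  rw [cls_add_of_disjoint hP hQ h] at hnz
  refine ⟨span (ZMod 2) {cls P, cls Q}, finrank_span_pair_eq_two ha hb hab, ?_, hnz⟩
  have hfour : ¬ hasRep 2 (cls (P ∪ Q)) :=
    not_hasRep_two_of_card_four (by rw [Finset.card_union_of_disjoint h, hP, hQ])
  refine Set.ncard_eq_two.2 ⟨cls P, cls Q, hab, ?_⟩
  ext x
  have hx := Set.ext_iff.1 hnz x
  simp only [Set.mem_ofPred_eq, Set.mem_insert_iff, Set.mem_singleton_iff] at hx
  change (x ∈ span (ZMod 2) {cls P, cls Q} ∧ x ≠ 0 ∧ hasRep 2 x) ↔ x = cls P ∨ x = cls Q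
  rw [← and_assoc, hx]
  constructor
  · rintro ⟨h | h | rfl, hr⟩
    · exact Or.inl h
    · exact Or.inr h
    · exact absurd hr hfour
  · rintro (rfl | rfl)
    · exact ⟨Or.inl rfl, P, hP, rfl⟩
    · exact ⟨Or.inr (Or.inl rfl), Q, hQ, rfl⟩

/-! ### Counting -/

lemma card_disjoint_pairs :
    Nat.card {PP : Finset (Finset (Fin 8)) // PP.card = 2 ∧
      (∀ B ∈ PP, B.card = 2) ∧
      (∀ B₁ ∈ PP, ∀ B₂ ∈ PP, B₁ ≠ B₂ → Disjoint B₁ B₂)} = 210 := by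
  -- Enumerating only the 378 two-element sets of pairs keeps the evaluation small.
  refine (Nat.subtype_card (((Finset.univ.powersetCard 2).powersetCard 2).filter
    fun PP : Finset (Finset (Fin 8)) => ∀ B₁ ∈ PP, ∀ B₂ ∈ PP, B₁ ≠ B₂ → Disjoint B₁ B₂)
    fun PP => ?_).trans ?_
  · simp only [Finset.mem_filter, Finset.mem_powersetCard, Finset.subset_iff,
      Finset.mem_univ, implies_true, true_and]
    tauto
  · decide +kernel

lemma card_subspaces :
    Nat.card {W : Submodule (ZMod 2) E3 //
      Module.finrank (ZMod 2) W = 2 ∧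
      Nat.card {x : E3 // x ∈ W ∧ x ≠ 0 ∧ hasRep 2 x} = 2} = 210 := by
  rw [← card_disjoint_pairs]
  choose F hF hF' using fun W : {W : Submodule (ZMod 2) E3 //
      Module.finrank (ZMod 2) W = 2 ∧
      Nat.card {x : E3 // x ∈ W ∧ x ≠ 0 ∧ hasRep 2 x} = 2} =>
    existsUnique_pairs W.1 W.2.1 W.2.2
  have hgood (W) : (F W).card = 2 ∧ (∀ B ∈ F W, B.card = 2) ∧
      (∀ B₁ ∈ F W, ∀ B₂ ∈ F W, B₁ ≠ B₂ → Disjoint B₁ B₂) := by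
    obtain ⟨hc, P, Q, hPQ, hP, hQ, hd, -⟩ := hF W
    refine ⟨hc, ?_, ?_⟩ <;> rw [hPQ]
    · simp [hP, hQ]
    · simp [hd, hd.symm]
  refine Nat.card_congr (Equiv.ofBijective (fun W => ⟨F W, hgood W⟩) ⟨?_, ?_⟩)
  · intro W W' h
    have h : F W = F W' := congrArg Subtype.val h
    obtain ⟨-, P, Q, hPQ, -, -, -, hW⟩ := hF W
    obtain ⟨hc, P', Q', hPQ', -, -, -, hW'⟩ := hF W'
    have hset : ({cls P, cls Q, cls (P ∪ Q)} : Set E3) = {cls P', cls Q', cls (P' ∪ Q')} := by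
      have hpair : ({P, Q} : Set (Finset (Fin 8))) = {P', Q'} := by
        rw [← Finset.coe_pair, ← hPQ, h, hPQ', Finset.coe_pair]
      rcases Set.pair_eq_pair_iff.1 hpair with ⟨rfl, rfl⟩ | ⟨rfl, rfl⟩
      · rfl
      · rw [Finset.union_comm, Set.insert_comm]
    have hx (x : E3) : (x ∈ W.1 ∧ x ≠ 0) ↔ (x ∈ W'.1 ∧ x ≠ 0) :=
      Set.ext_iff.1 (hW.trans (hset.trans hW'.symm)) x
    ext x
    by_cases h0 : x = 0
    · simp [h0]
    · simpa [h0] using hx x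
  · rintro ⟨PP, hc, h2, hd⟩
    obtain ⟨P, Q, hPQ, rfl⟩ := Finset.card_eq_two.1 hc
    have hP : P.card = 2 := h2 P (by simp)
    have hQ : Q.card = 2 := h2 Q (by simp)
    have hdPQ : Disjoint P Q := hd P (by simp) Q (by simp) hPQ
    obtain ⟨W, hW, hWc, hnz⟩ := exists_subspace P Q hP hQ hdPQ
    exact ⟨⟨W, hW, hWc⟩, Subtype.ext
      (hF' ⟨W, hW, hWc⟩ {P, Q} ⟨hc, P, Q, rfl, hP, hQ, hdPQ, hnz⟩).symm⟩

/-- a 2-dimensional subspace `W ⊆ E₃` exactly two of whose three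
nonzero elements have a 2-element representative determines a unique unordered pair
of disjoint 2-element subsets `P₁, P₂ ⊆ I` with nonzero elements of `W` exactly
`[P₁]`, `[P₂]`, `[P₁ ∪ P₂]`; conversely every pair of disjoint 2-element subsets
determines such a subspace.  Hence these subspaces (type II.2) are in bijection with
the 210 unordered pairs of disjoint 2-element subsets of an 8-element set. -/
theorem statement15 :
    (∀ W : Submodule (ZMod 2) E3, Module.finrank (ZMod 2) W = 2 →
      Nat.card {x : E3 // x ∈ W ∧ x ≠ 0 ∧ hasRep 2 x} = 2 →
      ∃! PP : Finset (Finset (Fin 8)), PP.card = 2 ∧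
        ∃ P₁ P₂ : Finset (Fin 8), PP = {P₁, P₂} ∧
          P₁.card = 2 ∧ P₂.card = 2 ∧ Disjoint P₁ P₂ ∧
          {x : E3 | x ∈ W ∧ x ≠ 0} = {cls P₁, cls P₂, cls (P₁ ∪ P₂)}) ∧
    (∀ P₁ P₂ : Finset (Fin 8), P₁.card = 2 → P₂.card = 2 → Disjoint P₁ P₂ →
      ∃ W : Submodule (ZMod 2) E3, Module.finrank (ZMod 2) W = 2 ∧
        Nat.card {x : E3 // x ∈ W ∧ x ≠ 0 ∧ hasRep 2 x} = 2 ∧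
        {x : E3 | x ∈ W ∧ x ≠ 0} = {cls P₁, cls P₂, cls (P₁ ∪ P₂)}) ∧
    Nat.card {PP : Finset (Finset (Fin 8)) // PP.card = 2 ∧
      (∀ B ∈ PP, B.card = 2) ∧
      (∀ B₁ ∈ PP, ∀ B₂ ∈ PP, B₁ ≠ B₂ → Disjoint B₁ B₂)} = 210 ∧
    Nat.card {W : Submodule (ZMod 2) E3 //
      Module.finrank (ZMod 2) W = 2 ∧
      Nat.card {x : E3 // x ∈ W ∧ x ≠ 0 ∧ hasRep 2 x} = 2} = 210 := by
  exact ⟨existsUnique_pairs, exists_subspace, card_disjoint_pairs, card_subspaces⟩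

end
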